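/- arXiv:2112.03996 — 2 statements merged into one kernel-verified Lean document; each statement's English description precedes it below -/
import Mathlib

section
/- Let 0 < p ≤ ∞, 0 < q ≤ ∞, τ ≥ 0 and δ > nτ. There is a constant C > 0 such that for every sequence (g_j)_{j≥0} ⊂ L^p_loc(ℝⁿ), ‖(Σ_{k≥0} 2^{−δ|j−k|} g_k)_{j≥0}‖_{ℓ^q L^p_τ} ≤ C ‖(g_j)_{j≥0}‖_{ℓ^q L^p_τ}. -/
open MeasureTheory
open scoped ENNReal NNReal

/-- The open dyadic cube `Q_{J,v} = 2^{−J}v + (0, 2^{−J})ⁿ`. -/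
def dyadicCube (n : ℕ) (J : ℤ) (v : Fin n → ℤ) : Set (EuclideanSpace ℝ (Fin n)) :=
  {x | ∀ i, (2 : ℝ) ^ (-J) * (v i : ℝ) < x i ∧ x i < (2 : ℝ) ^ (-J) * ((v i : ℝ) + 1)}

/-- The `L^p` (quasi-)norm (`0 < p ≤ ∞`) of a `[0,∞]`-valued function on a set `s ⊆ ℝⁿ`. -/
noncomputable def LpOn {n : ℕ} (p : ℝ≥0∞) (F : EuclideanSpace ℝ (Fin n) → ℝ≥0∞)
    (s : Set (EuclideanSpace ℝ (Fin n))) : ℝ≥0∞ :=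
  if p = ∞ then essSup F (volume.restrict s)
  else (∫⁻ x in s, F x ^ p.toReal) ^ (1 / p.toReal)

/-- The Morrey norm `‖F‖_{M^p_τ} = sup_{J,v} 2^{nJτ} ‖F‖_{L^p(Q_{J,v})}`. -/
noncomputable def morreyNormE (n : ℕ) (p : ℝ≥0∞) (τ : ℝ)
    (F : EuclideanSpace ℝ (Fin n) → ℝ≥0∞) : ℝ≥0∞ :=
  ⨆ (J : ℤ) (v : Fin n → ℤ),
    ENNReal.ofReal ((2 : ℝ) ^ ((n : ℝ) * (J : ℝ) * τ)) * LpOn p F (dyadicCube n J v)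

/-- The tail `ℓ^q` norm over indices `j ≥ max(0,J)` (supremum modification for `q = ∞`). -/
noncomputable def tailLqE (q : ℝ≥0∞) (J : ℤ) (a : ℕ → ℝ≥0∞) : ℝ≥0∞ :=
  if q = ∞ then ⨆ j : {j : ℕ // J ≤ (j : ℤ)}, a j
  else (∑' j : {j : ℕ // J ≤ (j : ℤ)}, a j ^ q.toReal) ^ (1 / q.toReal)

/-- The `ℓ^q L^p_τ` norm
`sup_{J,v} 2^{nJτ} ( Σ_{j ≥ max(0,J)} ‖f_j‖_{L^p(Q_{J,v})}^q )^{1/q}`. -/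
noncomputable def lqLpTauE (n : ℕ) (q p : ℝ≥0∞) (τ : ℝ)
    (F : ℕ → EuclideanSpace ℝ (Fin n) → ℝ≥0∞) : ℝ≥0∞ :=
  ⨆ (J : ℤ) (v : Fin n → ℤ),
    ENNReal.ofReal ((2 : ℝ) ^ ((n : ℝ) * (J : ℝ) * τ)) *
      tailLqE q J (fun j => LpOn p (F j) (dyadicCube n J v))

/-- A power with exponent at most one is countably subadditive on `[0,∞]`. -/
theorem ENNReal.tsum_rpow_le_tsum_rpow {ι : Type*} (f : ι → ℝ≥0∞) {r : ℝ} (hr : 0 < r)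
    (hr1 : r ≤ 1) : (∑' i, f i) ^ r ≤ ∑' i, f i ^ r := by
  have hmap : (∑' i, f i) ^ r = ⨆ s : Finset ι, (∑ i ∈ s, f i) ^ r := by
    rw [ENNReal.tsum_eq_iSup_sum]
    exact (ENNReal.orderIsoRpow r hr).map_iSup _
  rw [hmap]
  refine iSup_le fun s => le_trans ?_ (ENNReal.sum_le_tsum s)
  exact Finset.le_sum_of_subadditive (fun x : ℝ≥0∞ => x ^ r) (ENNReal.zero_rpow_of_pos hr).le
    (fun a b => ENNReal.rpow_add_le_add_rpow a b hr.le hr1) s f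

/-- Minkowski's inequality for countable families of `[0,∞]`-valued functions. -/
theorem eLpNorm_tsum_le_tsum_eLpNorm {α ι : Type*} [MeasurableSpace α] [Countable ι]
    {μ : Measure α} {p : ℝ≥0∞} (hp : 1 ≤ p) {f : ι → α → ℝ≥0∞} (hf : ∀ i, Measurable (f i)) :
    eLpNorm (fun x => ∑' i, f i x) p μ ≤ ∑' i, eLpNorm (f i) p μ := by
  rcases eq_or_ne p ∞ with rfl | hp_top
  · simp only [eLpNorm_exponent_top]
    refine essSup_le_of_ae_le _ ?_
    have hae : ∀ᵐ x ∂μ, ∀ i, f i x ≤ eLpNormEssSup (f i) μ :=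
      ae_all_iff.2 fun i => ENNReal.ae_le_essSup (f i)
    filter_upwards [hae] with x hx
    exact ENNReal.tsum_le_tsum hx
  have hp0 : p ≠ 0 := (zero_lt_one.trans_le hp).ne'
  have hpr : 0 < p.toReal := ENNReal.toReal_pos hp0 hp_top
  rw [eLpNorm_eq_lintegral_rpow_enorm_toReal hp0 hp_top, one_div, ENNReal.rpow_inv_le_iff hpr]
  have hmap : ∀ x, ‖∑' i, f i x‖ₑ ^ p.toReal
      = ⨆ s : Finset ι, (∑ i ∈ s, f i x) ^ p.toReal := fun x => by
    rw [enorm_eq_self, ENNReal.tsum_eq_iSup_sum]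
    exact (ENNReal.orderIsoRpow p.toReal hpr).map_iSup _
  have hmono : Monotone fun (s : Finset ι) (x : α) => (∑ i ∈ s, f i x) ^ p.toReal :=
    fun s t hst x => ENNReal.rpow_le_rpow (Finset.sum_le_sum_of_subset hst) hpr.le
  simp_rw [hmap]
  rw [lintegral_iSup_directed (fun s => by fun_prop) hmono.directed_le]
  refine iSup_le fun s => ?_
  rw [← ENNReal.rpow_inv_le_iff hpr, ← one_div]
  calc (∫⁻ x, (∑ i ∈ s, f i x) ^ p.toReal ∂μ) ^ (1 / p.toReal)
      = eLpNorm (∑ i ∈ s, f i) p μ := by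
        simp [eLpNorm_eq_lintegral_rpow_enorm_toReal hp0 hp_top]
    _ ≤ ∑ i ∈ s, eLpNorm (f i) p μ :=
        eLpNorm_sum_le (fun i _ => (hf i).aestronglyMeasurable) hp
    _ ≤ ∑' i, eLpNorm (f i) p μ := ENNReal.sum_le_tsum s

/-- The `r`-triangle inequality in `L^p` for `0 < r ≤ p`. -/
theorem eLpNorm_rpow_le_tsum_of_rpow_le {α ι : Type*} [MeasurableSpace α] [Countable ι]
    {μ : Measure α} {p : ℝ≥0∞} {r : ℝ} (hr : 0 < r) (hrp : ENNReal.ofReal r ≤ p)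
    {f : ι → α → ℝ≥0∞} {h : α → ℝ≥0∞} (hf : ∀ i, Measurable (f i))
    (hle : ∀ x, h x ^ r ≤ ∑' i, f i x ^ r) :
    eLpNorm h p μ ^ r ≤ ∑' i, eLpNorm (f i) p μ ^ r := by
  have hr0 : ENNReal.ofReal r ≠ 0 := (ENNReal.ofReal_pos.2 hr).ne'
  have hdiv : p / ENNReal.ofReal r * ENNReal.ofReal r = p :=
    ENNReal.div_mul_cancel hr0 ENNReal.ofReal_ne_top
  have hone : 1 ≤ p / ENNReal.ofReal r := by
    rwa [ENNReal.le_div_iff_mul_le (.inl hr0) (.inl ENNReal.ofReal_ne_top), one_mul]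
  have hpow : ∀ u : α → ℝ≥0∞,
      eLpNorm u p μ ^ r = eLpNorm (fun x => u x ^ r) (p / ENNReal.ofReal r) μ := fun u => by
    have := eLpNorm_enorm_rpow (p := p / ENNReal.ofReal r) (μ := μ) u hr
    rw [hdiv] at this
    simpa using this.symm
  simp_rw [hpow]
  refine le_trans (eLpNorm_mono_enorm fun x => ?_)
    (eLpNorm_tsum_le_tsum_eLpNorm hone fun i => (hf i).pow_const r)
  simpa using hle x

theorem LpOn_eq_eLpNorm {n : ℕ} {p : ℝ≥0∞} (hp : 0 < p) (F : EuclideanSpace ℝ (Fin n) → ℝ≥0∞)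
    (s : Set (EuclideanSpace ℝ (Fin n))) : LpOn p F s = eLpNorm F p (volume.restrict s) := by
  unfold LpOn
  split_ifs with h
  · subst h
    simp [eLpNormEssSup]
  · simp [eLpNorm_eq_lintegral_rpow_enorm_toReal hp.ne' h]

theorem tailLqE_eq_eLpNorm {q : ℝ≥0∞} (hq : 0 < q) (J : ℤ) (a : ℕ → ℝ≥0∞) :
    tailLqE q J a = eLpNorm (fun j : {j : ℕ // J ≤ (j : ℤ)} => a j) q Measure.count := by
  unfold tailLqE
  split_ifs with h
  · subst h
    simp [eLpNormEssSup]
  · simp [eLpNorm_eq_lintegral_rpow_enorm_toReal hq.ne' h, lintegral_count]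

theorem eLpNorm_const_mul_le_mul_eLpNorm {α : Type*} [MeasurableSpace α] {μ : Measure α}
    (p : ℝ≥0∞) (c : ℝ≥0) (f : α → ℝ≥0∞) :
    eLpNorm (fun x => c * f x) p μ ≤ c * eLpNorm f p μ := by
  refine (eLpNorm_le_nnreal_smul_eLpNorm_of_ae_le_mul' (c := c) (f := fun x => c * f x) (g := f)
    (Filter.Eventually.of_forall fun x => ?_) p).trans_eq ?_
  · simp
  · rfl

/-- Extension by zero of a sequence to negative indices, shifted by `m`. -/
def shiftZero {β : Type*} [Zero β] (m : ℤ) (a : ℕ → β) (j : ℕ) : β :=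
  if 0 ≤ (j : ℤ) + m then a ((j : ℤ) + m).toNat else 0

theorem tailLqE_mono {q : ℝ≥0∞} (J : ℤ) {a b : ℕ → ℝ≥0∞} (h : ∀ j, a j ≤ b j) :
    tailLqE q J a ≤ tailLqE q J b := by
  unfold tailLqE
  split_ifs
  · exact iSup_mono fun j => h j
  · gcongr with j
    exact h j

theorem tailLqE_shiftZero_le {q : ℝ≥0∞} (hq : 0 < q) {J J' m : ℤ} (hJ : J' ≤ J + m)
    (a : ℕ → ℝ≥0∞) : tailLqE q J (shiftZero m a) ≤ tailLqE q J' a := by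
  unfold tailLqE
  split_ifs with h
  · refine iSup_le fun j => ?_
    unfold shiftZero
    split_ifs with hj
    · exact le_iSup (fun i : {i : ℕ // J' ≤ (i : ℤ)} => a i)
        ⟨((j : ℤ) + m).toNat, by have := j.2; omega⟩
    · exact zero_le
  · have hqr : 0 < q.toReal := ENNReal.toReal_pos hq.ne' h
    refine ENNReal.rpow_le_rpow ?_ (by positivity)
    let S : Set {j : ℕ // J ≤ (j : ℤ)} := {j | 0 ≤ ((j : ℕ) : ℤ) + m}
    have hsupp : Function.support (fun j : {j : ℕ // J ≤ (j : ℤ)} =>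
        shiftZero m a j ^ q.toReal) ⊆ S := by
      intro j hj
      by_contra hjS
      apply hj
      have : ¬ 0 ≤ ((j : ℕ) : ℤ) + m := hjS
      simp [shiftZero, this, hqr]
    rw [← tsum_subtype_eq_of_support_subset hsupp]
    let φ : S → {i : ℕ // J' ≤ (i : ℤ)} := fun j =>
      ⟨(((j : {j : ℕ // J ≤ (j : ℤ)}) : ℤ) + m).toNat, by have := j.1.2; omega⟩
    have hφ : Function.Injective φ := by
      intro i j hij
      have hi : 0 ≤ ((i.1 : ℕ) : ℤ) + m := i.2
      have hj : 0 ≤ ((j.1 : ℕ) : ℤ) + m := j.2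
      have := congrArg Subtype.val hij
      simp only [φ] at this
      apply Subtype.ext
      apply Subtype.ext
      omega
    refine le_trans (le_of_eq (tsum_congr fun j => ?_))
      (ENNReal.tsum_comp_le_tsum_of_injective hφ
        (fun i : {i : ℕ // J' ≤ (i : ℤ)} => a i ^ q.toReal))
    have hj : 0 ≤ ((j.1 : ℕ) : ℤ) + m := j.2
    simp [shiftZero, hj, φ]

/-- Every dyadic cube is contained in its ancestor `l` generations up. -/
theorem exists_dyadicCube_subset (n : ℕ) (J : ℤ) (v : Fin n → ℤ) (l : ℕ) :
    ∃ v' : Fin n → ℤ, dyadicCube n J v ⊆ dyadicCube n (J - l) v' := by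
  refine ⟨fun i => v i / 2 ^ l, fun x hx i => ?_⟩
  have hscale : (2 : ℝ) ^ (-(J - (l : ℤ))) = 2 ^ (-J) * 2 ^ l := by
    rw [neg_sub, sub_eq_add_neg, add_comm, zpow_add₀ two_ne_zero, zpow_natCast]
  have hpos : (0 : ℝ) < 2 ^ (-J) := by positivity
  have hlow : (2 : ℝ) ^ l * ((v i / 2 ^ l : ℤ) : ℝ) ≤ v i := by
    exact_mod_cast Int.mul_ediv_self_le (x := v i) (k := 2 ^ l) (by positivity)
  have hup : (v i : ℝ) + 1 ≤ 2 ^ l * (((v i / 2 ^ l : ℤ) : ℝ) + 1) := by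
    have := Int.lt_mul_ediv_self_add (x := v i) (k := 2 ^ l) (by positivity)
    have h2 : v i + 1 ≤ 2 ^ l * (v i / 2 ^ l + 1) := by linarith
    exact_mod_cast h2
  rw [hscale, mul_assoc, mul_assoc]
  exact ⟨(mul_le_mul_of_nonneg_left hlow hpos.le).trans_lt (hx i).1,
    (hx i).2.trans_le (mul_le_mul_of_nonneg_left hup hpos.le)⟩

theorem summable_rpow_two_neg_mul_abs {ε : ℝ} (hε : 0 < ε) :
    Summable fun m : ℤ => (2 : ℝ) ^ (-ε * |(m : ℝ)|) := by
  have hnat : Summable fun k : ℕ => (2 : ℝ) ^ (-ε * (k : ℝ)) := by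
    simp_rw [Real.rpow_mul (zero_le_two), Real.rpow_natCast]
    exact summable_geometric_of_lt_one (by positivity)
      (Real.rpow_lt_one_of_one_lt_of_neg one_lt_two (neg_lt_zero.2 hε))
  refine Summable.of_nat_of_neg ?_ ?_ <;> simpa using hnat

/-- The weighted tail norm on one cube of the sequence shifted by `m` is controlled by the full
norm, at the cost of a factor `2^{nτ|m|}`. -/
theorem weight_mul_tailLqE_shiftZero_le {n : ℕ} {p q : ℝ≥0∞} (hp : 0 < p) (hq : 0 < q) (τ : ℝ)
    (g : ℕ → EuclideanSpace ℝ (Fin n) → ℝ≥0∞) (J : ℤ) (v : Fin n → ℤ) (m : ℤ) :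
    ENNReal.ofReal ((2 : ℝ) ^ ((n : ℝ) * (J : ℝ) * τ)) *
        tailLqE q J (shiftZero m fun i => LpOn p (g i) (dyadicCube n J v))
      ≤ ENNReal.ofReal ((2 : ℝ) ^ ((n : ℝ) * τ * |(m : ℝ)|)) * lqLpTauE n q p τ g := by
  obtain ⟨v', hv'⟩ := exists_dyadicCube_subset n J v m.natAbs
  set J' : ℤ := J - m.natAbs with hJ'
  have habs : ((m.natAbs : ℤ) : ℝ) = |(m : ℝ)| := by
    rw [Int.natCast_natAbs, Int.cast_abs]
  have hweight : (2 : ℝ) ^ ((n : ℝ) * (J : ℝ) * τ)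
      = 2 ^ ((n : ℝ) * τ * |(m : ℝ)|) * 2 ^ ((n : ℝ) * (J' : ℝ) * τ) := by
    rw [← Real.rpow_add two_pos, hJ', Int.cast_sub, habs]
    ring_nf
  rw [hweight, ENNReal.ofReal_mul (by positivity), mul_assoc]
  gcongr
  refine le_trans ?_ (le_iSup₂ (f := fun (J : ℤ) (v : Fin n → ℤ) =>
    ENNReal.ofReal ((2 : ℝ) ^ ((n : ℝ) * (J : ℝ) * τ)) *
      tailLqE q J (fun j => LpOn p (g j) (dyadicCube n J v))) J' v')
  gcongr
  refine (tailLqE_shiftZero_le hq (by omega) _).trans (tailLqE_mono J' fun i => ?_)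
  rw [LpOn_eq_eLpNorm hp, LpOn_eq_eLpNorm hp]
  exact eLpNorm_mono_measure _ (Measure.restrict_mono hv' le_rfl)

/-- The `r`-triangle inequality for the tail norms on one cube, applied to the decomposition of the
discrete convolution into shifts. -/
theorem tailLqE_convolution_rpow_le {n : ℕ} {p q : ℝ≥0∞} (hp : 0 < p) (hq : 0 < q) {r : ℝ}
    (hr : 0 < r) (hr1 : r ≤ 1) (hrp : ENNReal.ofReal r ≤ p) (hrq : ENNReal.ofReal r ≤ q) (δ : ℝ)
    {g : ℕ → EuclideanSpace ℝ (Fin n) → ℝ≥0∞} (hg : ∀ j, Measurable (g j)) (J : ℤ)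
    (s : Set (EuclideanSpace ℝ (Fin n))) :
    tailLqE q J (fun j => LpOn p (fun x => ∑' k : ℕ,
        ENNReal.ofReal ((2 : ℝ) ^ (-δ * |(j : ℝ) - (k : ℝ)|)) * g k x) s) ^ r
      ≤ ∑' m : ℤ, (ENNReal.ofReal ((2 : ℝ) ^ (-δ * |(m : ℝ)|)) *
          tailLqE q J (shiftZero m fun i => LpOn p (g i) s)) ^ r := by
  let c : ℤ → ℝ≥0 := fun m => Real.toNNReal ((2 : ℝ) ^ (-δ * |(m : ℝ)|))
  have hmeas : ∀ (m : ℤ) (j : ℕ), Measurable fun x => (c m : ℝ≥0∞) * shiftZero m g j x := by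
    intro m j
    unfold shiftZero
    split_ifs
    · exact (hg _).const_mul _
    · exact measurable_const.const_mul _
  have hshift : ∀ (j : ℕ) (x : EuclideanSpace ℝ (Fin n)),
      ∑' k : ℕ, ENNReal.ofReal ((2 : ℝ) ^ (-δ * |(j : ℝ) - (k : ℝ)|)) * g k x
        ≤ ∑' m : ℤ, (c m : ℝ≥0∞) * shiftZero m g j x := by
    intro j x
    have hinj : Function.Injective fun k : ℕ => (k : ℤ) - j := fun a b hab => by
      simpa using hab
    refine le_trans (le_of_eq (tsum_congr fun k => ?_))
      (ENNReal.tsum_comp_le_tsum_of_injective hinj fun m : ℤ =>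
        (c m : ℝ≥0∞) * shiftZero m g j x)
    simp [c, shiftZero, ENNReal.ofReal, abs_sub_comm]
  have hterm : ∀ (m : ℤ) (j : ℕ), LpOn p (fun x => (c m : ℝ≥0∞) * shiftZero m g j x) s
      ≤ c m * shiftZero m (fun i => LpOn p (g i) s) j := by
    intro m j
    rw [LpOn_eq_eLpNorm hp]
    refine (eLpNorm_const_mul_le_mul_eLpNorm p (c m) _).trans ?_
    gcongr
    unfold shiftZero
    split_ifs
    · exact (LpOn_eq_eLpNorm hp _ _).ge
    · simp
  have hinner : ∀ j : ℕ, LpOn p (fun x => ∑' k : ℕ,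
      ENNReal.ofReal ((2 : ℝ) ^ (-δ * |(j : ℝ) - (k : ℝ)|)) * g k x) s ^ r
        ≤ ∑' m : ℤ, (c m * shiftZero m (fun i => LpOn p (g i) s) j) ^ r := by
    intro j
    refine le_trans ?_ (ENNReal.tsum_le_tsum fun m => ENNReal.rpow_le_rpow (hterm m j) hr.le)
    simp_rw [LpOn_eq_eLpNorm hp]
    exact eLpNorm_rpow_le_tsum_of_rpow_le hr hrp (fun m => hmeas m j) fun x =>
      (ENNReal.rpow_le_rpow (hshift j x) hr.le).trans
        (ENNReal.tsum_rpow_le_tsum_rpow _ hr hr1)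
  rw [tailLqE_eq_eLpNorm hq]
  refine (eLpNorm_rpow_le_tsum_of_rpow_le hr hrq
    (f := fun (m : ℤ) (j : {j : ℕ // J ≤ (j : ℤ)}) =>
      c m * shiftZero m (fun i => LpOn p (g i) s) j)
    (fun m => measurable_of_countable _) fun j => hinner j).trans (ENNReal.tsum_le_tsum fun m => ENNReal.rpow_le_rpow ?_ hr.le)
  rw [tailLqE_eq_eLpNorm hq]
  exact eLpNorm_const_mul_le_mul_eLpNorm q (c m) _

/-- **Discrete convolution inequality on `ℓ^q L^p_τ`.** For `0 < p,q ≤ ∞`, `τ ≥ 0` and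
`δ > nτ`, there is `C > 0` with
`‖(Σ_k 2^{−δ|j−k|} g_k)_j‖_{ℓ^q L^p_τ} ≤ C ‖(g_j)_j‖_{ℓ^q L^p_τ}`. -/
theorem stmt5 (n : ℕ) (p q : ℝ≥0∞) (hp : 0 < p) (hq : 0 < q) (τ δ : ℝ)
    (hτ : 0 ≤ τ) (hδ : (n : ℝ) * τ < δ) :
    ∃ C : ℝ≥0∞, 0 < C ∧ C < ∞ ∧
      ∀ g : ℕ → EuclideanSpace ℝ (Fin n) → ℝ≥0∞, (∀ j, Measurable (g j)) →
        lqLpTauE n q p τ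
            (fun j x => ∑' k : ℕ, ENNReal.ofReal ((2 : ℝ) ^ (-δ * |(j : ℝ) - (k : ℝ)|)) * g k x)
          ≤ C * lqLpTauE n q p τ g := by
  obtain ⟨r, hr, hr1, hrp, hrq⟩ : ∃ r : ℝ, 0 < r ∧ r ≤ 1 ∧ ENNReal.ofReal r ≤ p ∧
      ENNReal.ofReal r ≤ q := by
    have hpos : 0 < min 1 (min p q) := lt_min one_pos (lt_min hp hq)
    have htop : min 1 (min p q) ≠ ∞ := ((min_le_left _ _).trans_lt ENNReal.one_lt_top).ne
    refine ⟨(min 1 (min p q)).toReal, ENNReal.toReal_pos hpos.ne' htop,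
      ENNReal.toReal_le_of_le_ofReal zero_le_one (by simp), ?_, ?_⟩ <;>
      rw [ENNReal.ofReal_toReal htop] <;> simp
  set ε : ℝ := δ - n * τ with hε
  have hεpos : 0 < ε := sub_pos.2 hδ
  set K : ℝ≥0∞ := ∑' m : ℤ, ENNReal.ofReal ((2 : ℝ) ^ (-ε * |(m : ℝ)|)) ^ r with hK
  have hKpos : 0 < K := by
    refine lt_of_lt_of_le ?_ (ENNReal.le_tsum 0)
    simp
  have hKtop : K ≠ ∞ := by
    have hterm : ∀ m : ℤ, ENNReal.ofReal ((2 : ℝ) ^ (-ε * |(m : ℝ)|)) ^ r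
        = ENNReal.ofReal ((2 : ℝ) ^ (-(ε * r) * |(m : ℝ)|)) := fun m => by
      rw [ENNReal.ofReal_rpow_of_nonneg (by positivity) hr.le, ← Real.rpow_mul zero_le_two]
      ring_nf
    rw [hK, tsum_congr hterm]
    exact (summable_rpow_two_neg_mul_abs (mul_pos hεpos hr)).tsum_ofReal_ne_top
  refine ⟨K ^ r⁻¹, ENNReal.rpow_pos hKpos hKtop,
    ENNReal.rpow_lt_top_of_nonneg (by positivity) hKtop, fun g hg => iSup₂_le fun J v => ?_⟩
  rw [← ENNReal.rpow_le_rpow_iff hr, ENNReal.mul_rpow_of_nonneg _ _ hr.le,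
    ENNReal.mul_rpow_of_nonneg _ _ hr.le, ENNReal.rpow_inv_rpow hr.ne']
  refine (mul_le_mul_right (tailLqE_convolution_rpow_le hp hq hr hr1 hrp hrq δ hg J
    (dyadicCube n J v)) _).trans ?_
  rw [hK, ← ENNReal.tsum_mul_left, ← ENNReal.tsum_mul_right]
  refine ENNReal.tsum_le_tsum fun m => ?_
  rw [← ENNReal.mul_rpow_of_nonneg _ _ hr.le, ← ENNReal.mul_rpow_of_nonneg _ _ hr.le]
  refine ENNReal.rpow_le_rpow ?_ hr.le
  rw [mul_left_comm]
  refine (mul_le_mul_right (weight_mul_tailLqE_shiftZero_le hp hq τ g J v m) _).trans_eq ?_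
  rw [← mul_assoc, ← ENNReal.ofReal_mul (by positivity), ← Real.rpow_add two_pos, hε]
  ring_nf
end

section
/- Let η, θ be sequences of Schwartz functions on ℝⁿ with η_j(x) = 2^{(j−1)n}η₁(2^{j−1}x) and θ_k(x) = 2^{(k−1)n}θ₁(2^{k−1}x) for j,k ≥ 1, where η₁ and θ₁ have vanishing moments of all orders (∫ x^α η₁ = ∫ x^α θ₁ = 0 for all multi-indices α). Then for every N > 0 there is C = C(η,θ,N) > 0 with ∫_{ℝⁿ} |η_j ∗ θ_k(x)| (1 + 2^k|x|)^N dx ≤ C 2^{−N|j−k|} for all j, k ≥ 0. -/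
open MeasureTheory
open scoped ENNReal

section Schwartz

variable {E : Type*} [NormedAddCommGroup E] [NormedSpace ℝ E]

/-- The Taylor remainder of order `M` of a Schwartz function at `x` in direction `y` decays
rapidly in `x`, uniformly up to polynomial growth in `y`. -/
theorem SchwartzMap.exists_norm_sub_taylor_le (f : SchwartzMap E ℝ) (M K : ℕ) :
    ∃ A : ℝ, 0 ≤ A ∧ ∀ x y : E,
      |f (x + y) - ∑ k ∈ Finset.range M,
          ((k.factorial : ℝ)⁻¹ • iteratedFDeriv ℝ k f x (fun _ => y))| ≤
        A * (‖y‖ ^ M * (1 + ‖y‖) ^ K) / (1 + ‖x‖) ^ K := by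
  obtain ⟨A, hA⟩ : ∃ A : ℝ, ∀ x, (1 + ‖x‖) ^ K * ‖iteratedFDeriv ℝ M f x‖ ≤ A :=
    ⟨_, fun x => SchwartzMap.one_add_le_sup_seminorm_apply (𝕜 := ℝ) (m := (K, M)) le_rfl le_rfl f x⟩
  have hA0 : 0 ≤ A := le_trans (by positivity) (hA 0)
  have key : ∀ x y : E, ∀ t ∈ Set.Icc (0 : ℝ) 1,
      ‖iteratedFDeriv ℝ M f (x + t • y) (fun _ => y)‖ ≤
        A * (‖y‖ ^ M * (1 + ‖y‖) ^ K) / (1 + ‖x‖) ^ K := by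
    intro x y t ht
    have h1 : ‖iteratedFDeriv ℝ M f (x + t • y) (fun _ => y)‖ ≤
        ‖iteratedFDeriv ℝ M f (x + t • y)‖ * ‖y‖ ^ M := by
      simpa using (iteratedFDeriv ℝ M f (x + t • y)).le_opNorm (fun _ => y)
    have h2 : 1 + ‖x‖ ≤ (1 + ‖x + t • y‖) * (1 + ‖y‖) := by
      have h3 : ‖x‖ ≤ ‖x + t • y‖ + ‖y‖ := by
        calc ‖x‖ = ‖(x + t • y) - t • y‖ := by simp
          _ ≤ ‖x + t • y‖ + ‖t • y‖ := norm_sub_le _ _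
          _ ≤ ‖x + t • y‖ + ‖y‖ := by
            gcongr
            rw [norm_smul, Real.norm_of_nonneg ht.1]
            exact mul_le_of_le_one_left (norm_nonneg _) ht.2
      nlinarith [norm_nonneg (x + t • y), norm_nonneg y]
    rw [le_div_iff₀ (by positivity)]
    calc _ ≤ (‖iteratedFDeriv ℝ M f (x + t • y)‖ * ‖y‖ ^ M) *
          ((1 + ‖x + t • y‖) * (1 + ‖y‖)) ^ K := by gcongr
      _ = ((1 + ‖x + t • y‖) ^ K * ‖iteratedFDeriv ℝ M f (x + t • y)‖) *
          (‖y‖ ^ M * (1 + ‖y‖) ^ K) := by rw [mul_pow]; ring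
      _ ≤ _ := by gcongr; exact hA _
  refine ⟨A, hA0, fun x y => ?_⟩
  rcases M with _ | m
  · simpa using key x y 1 (by simp)
  · rw [map_add_eq_sum_add_integral_iteratedFDeriv (n := m)
      (fun t _ => f.contDiffAt ((m + 1 : ℕ) : ℕ∞)), add_sub_cancel_left, smul_eq_mul, abs_mul]
    have h1 : |((m.factorial : ℝ))⁻¹| ≤ 1 := by
      rw [abs_of_nonneg (by positivity)]
      exact inv_le_one_of_one_le₀ (by exact_mod_cast m.factorial_pos)
    have h2 := intervalIntegral.norm_integral_le_of_norm_le_const (a := (0 : ℝ)) (b := 1)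
      (f := fun t : ℝ => (1 - t) ^ m • iteratedFDeriv ℝ (m + 1) f (x + t • y) (fun _ => y))
      (C := A * (‖y‖ ^ (m + 1) * (1 + ‖y‖) ^ K) / (1 + ‖x‖) ^ K) (by
        intro t ht
        rw [Set.uIoc_of_le zero_le_one] at ht
        rw [norm_smul]
        refine (mul_le_of_le_one_left (norm_nonneg _) ?_).trans (key x y t ⟨ht.1.le, ht.2⟩)
        rw [norm_pow, Real.norm_of_nonneg (by linarith [ht.2])]
        exact pow_le_one₀ (by linarith [ht.2]) (by linarith [ht.1]))
    simp only [sub_zero, abs_one, mul_one, Real.norm_eq_abs] at h2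
    exact (mul_le_of_le_one_left (abs_nonneg _) h1).trans h2

variable [MeasurableSpace E] [BorelSpace E] [SecondCountableTopology E]
  {μ : Measure E} [μ.HasTemperateGrowth]

theorem SchwartzMap.integrable_pow_mul_one_add_norm_pow_mul (g : SchwartzMap E ℝ) (M K : ℕ) :
    Integrable (fun z => ‖z‖ ^ M * (1 + ‖z‖) ^ K * |g z|) μ := by
  have : (fun z => ‖z‖ ^ M * (1 + ‖z‖) ^ K * |g z|) =
      fun z => ∑ i ∈ Finset.range (K + 1), (K.choose i : ℝ) * (‖z‖ ^ (M + (K - i)) * ‖g z‖) := by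
    ext z
    rw [add_pow, Finset.mul_sum, Finset.sum_mul]
    refine Finset.sum_congr rfl fun i _ => ?_
    rw [pow_add, Real.norm_eq_abs]
    ring
  rw [this]
  exact integrable_finsetSum _ fun i _ => (g.integrable_pow_mul μ _).const_mul _

theorem SchwartzMap.integrable_multilinear_mul (g : SchwartzMap E ℝ) {k : ℕ}
    (L : ContinuousMultilinearMap ℝ (fun _ : Fin k => E) ℝ) :
    Integrable (fun z => L (fun _ => z) * g z) μ := by
  refine ((g.integrable_pow_mul μ k).const_mul ‖L‖).mono' ?_ (.of_forall fun z => ?_)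
  · have : Continuous fun z : E => L (fun _ => z) := L.cont.comp (by fun_prop)
    exact (this.mul g.continuous).aestronglyMeasurable
  · rw [norm_mul, ← mul_assoc]
    gcongr
    simpa using L.le_opNorm (fun _ => z)

/-- If the moments of order `< M` of `g` vanish, averaging a Schwartz function `f` against `g`
dilated by `t` gains a factor `t ^ M`, with rapid decay in the base point. -/
theorem SchwartzMap.exists_abs_integral_comp_sub_smul_mul_le (f g : SchwartzMap E ℝ) (M K : ℕ)
    (hg : ∀ k < M, ∀ L : ContinuousMultilinearMap ℝ (fun _ : Fin k => E) ℝ,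
      ∫ z, L (fun _ => z) * g z ∂μ = 0) :
    ∃ C : ℝ, 0 ≤ C ∧ ∀ t ∈ Set.Icc (0 : ℝ) 1, ∀ x : E,
      |∫ z, f (x - t • z) * g z ∂μ| ≤ C * t ^ M / (1 + ‖x‖) ^ K := by
  obtain ⟨A, hA0, hA⟩ := f.exists_norm_sub_taylor_le M K
  refine ⟨A * ∫ z, ‖z‖ ^ M * (1 + ‖z‖) ^ K * |g z| ∂μ, by positivity, fun t ht x => ?_⟩
  have hint : Integrable (fun z => f (x - t • z) * g z) μ := by
    refine g.integrable.bdd_mul (c := SchwartzMap.seminorm ℝ 0 0 f) ?_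
      (.of_forall fun z => f.norm_le_seminorm ℝ _)
    exact (f.continuous.comp (by fun_prop)).aestronglyMeasurable
  have hterm : ∀ k z, ((k.factorial : ℝ)⁻¹ • iteratedFDeriv ℝ k f x (fun _ => -(t • z))) * g z =
      ((k.factorial : ℝ)⁻¹ * (-t) ^ k) * (iteratedFDeriv ℝ k f x (fun _ => z) * g z) := by
    intro k z
    have := (iteratedFDeriv ℝ k f x).map_smul_univ (fun _ => -t) (fun _ => z)
    simp only [neg_smul, Finset.prod_const, Finset.card_univ, Fintype.card_fin] at this
    rw [this]
    simp only [smul_eq_mul]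
    ring
  have hpoly : Integrable (fun z => (∑ k ∈ Finset.range M,
      ((k.factorial : ℝ)⁻¹ • iteratedFDeriv ℝ k f x (fun _ => -(t • z)))) * g z) μ := by
    simp only [Finset.sum_mul, hterm]
    exact integrable_finsetSum _ fun k _ => (g.integrable_multilinear_mul _).const_mul _
  have hzero : ∫ z, (∑ k ∈ Finset.range M,
      ((k.factorial : ℝ)⁻¹ • iteratedFDeriv ℝ k f x (fun _ => -(t • z)))) * g z ∂μ = 0 := by
    simp only [Finset.sum_mul, hterm]
    rw [integral_finsetSum _ fun k _ => (g.integrable_multilinear_mul _).const_mul _]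
    refine Finset.sum_eq_zero fun k hk => ?_
    rw [integral_const_mul, hg k (Finset.mem_range.1 hk), mul_zero]
  rw [← sub_zero (∫ z, f (x - t • z) * g z ∂μ), ← hzero, ← integral_sub hint hpoly]
  have hbound : ∀ z, ‖f (x - t • z) * g z - (∑ k ∈ Finset.range M,
      ((k.factorial : ℝ)⁻¹ • iteratedFDeriv ℝ k f x (fun _ => -(t • z)))) * g z‖ ≤
      A * t ^ M / (1 + ‖x‖) ^ K * (‖z‖ ^ M * (1 + ‖z‖) ^ K * |g z|) := by
    intro z
    rw [← sub_mul, norm_mul, Real.norm_eq_abs, Real.norm_eq_abs, sub_eq_add_neg x]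
    have hz : ‖-(t • z)‖ = t * ‖z‖ := by rw [norm_neg, norm_smul, Real.norm_of_nonneg ht.1]
    have hz' : t * ‖z‖ ≤ ‖z‖ := mul_le_of_le_one_left (norm_nonneg _) ht.2
    have ht0 := ht.1
    calc _ ≤ A * (‖-(t • z)‖ ^ M * (1 + ‖-(t • z)‖) ^ K) / (1 + ‖x‖) ^ K * |g z| := by
          gcongr
          exact hA x _
      _ ≤ A * ((t * ‖z‖) ^ M * (1 + ‖z‖) ^ K) / (1 + ‖x‖) ^ K * |g z| := by
          rw [hz]
          gcongr
      _ = _ := by rw [mul_pow]; ring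
  refine (norm_integral_le_of_norm_le
    ((g.integrable_pow_mul_one_add_norm_pow_mul M K).const_mul _) (.of_forall hbound)).trans_eq ?_
  rw [integral_const_mul]
  ring

end Schwartz

section Euclidean

variable {n : ℕ}

theorem integral_multilinear_mul_eq_zero_of_moments (g : SchwartzMap (EuclideanSpace ℝ (Fin n)) ℝ)
    (hg : ∀ α : Fin n → ℕ, ∫ x : EuclideanSpace ℝ (Fin n), (∏ i, x i ^ α i) * g x = 0)
    {k : ℕ} (L : ContinuousMultilinearMap ℝ (fun _ : Fin k => EuclideanSpace ℝ (Fin n)) ℝ) :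
    ∫ z, L (fun _ => z) * g z = 0 := by
  let e : Fin n → EuclideanSpace ℝ (Fin n) := fun i => EuclideanSpace.basisFun (Fin n) ℝ i
  have hmon : ∀ (r : Fin k → Fin n) (z : EuclideanSpace ℝ (Fin n)),
      ∏ i, z (r i) = ∏ j, z j ^ (Finset.univ.filter fun i => r i = j).card := by
    intro r z
    rw [← Finset.prod_fiberwise' Finset.univ r (fun j => z j)]
    simp
  have hexp : ∀ z, L (fun _ => z) * g z = ∑ r : Fin k → Fin n,
      L (fun i => e (r i)) *
        ((∏ j, z j ^ (Finset.univ.filter fun i => r i = j).card) * g z) := by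
    intro z
    have hz : z = ∑ i, z i • e i := by
      simpa [e] using ((EuclideanSpace.basisFun (Fin n) ℝ).sum_repr z).symm
    have h1 : L (fun _ => z) = ∑ r : Fin k → Fin n, L (fun i => z (r i) • e (r i)) := by
      conv_lhs => rw [hz]
      exact L.map_sum (fun _ i => z i • e i)
    rw [h1, Finset.sum_mul]
    refine Finset.sum_congr rfl fun r _ => ?_
    rw [L.map_smul_univ (fun i => z (r i)) (fun i => e (r i)), hmon, smul_eq_mul]
    ring
  have hint : ∀ α : Fin n → ℕ,
      Integrable fun z : EuclideanSpace ℝ (Fin n) => (∏ j, z j ^ α j) * g z := by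
    intro α
    refine (g.integrable_pow_mul volume (∑ j, α j)).mono' ?_ (.of_forall fun z => ?_)
    · have : Continuous fun z : EuclideanSpace ℝ (Fin n) => ∏ j, z j ^ α j := by fun_prop
      exact (this.mul g.continuous).aestronglyMeasurable
    · rw [norm_mul, norm_prod, ← Finset.prod_pow_eq_pow_sum]
      gcongr with j
      rw [norm_pow]
      gcongr
      exact PiLp.norm_apply_le z j
  simp only [hexp]
  rw [integral_finsetSum _ fun r _ => (hint _).const_mul _]
  exact Finset.sum_eq_zero fun r _ => by rw [integral_const_mul, hg, mul_zero]

theorem integral_dilation_mul_dilation (f g : EuclideanSpace ℝ (Fin n) → ℝ) {a b : ℝ}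
    (hb : 0 < b) (x : EuclideanSpace ℝ (Fin n)) :
    ∫ y, (a ^ n * f (a • (x - y))) * (b ^ n * g (b • y)) =
      a ^ n * ∫ z, f (a • x - (a / b) • z) * g z := by
  have h := Measure.integral_comp_smul_of_nonneg volume
    (fun z : EuclideanSpace ℝ (Fin n) => f (a • x - (a / b) • z) * g z) b (hR := hb.le)
  have hy : ∀ y, (a ^ n * f (a • (x - y))) * (b ^ n * g (b • y)) =
      a ^ n * b ^ n * (f (a • x - (a / b) • b • y) * g (b • y)) := by
    intro y
    rw [smul_smul, div_mul_cancel₀ _ hb.ne', smul_sub]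
    ring
  simp only [hy]
  rw [integral_const_mul, h, finrank_euclideanSpace_fin, smul_eq_mul]
  field_simp

/-- Weighted `L¹` bound for the convolution of two dilated Schwartz functions, the finer of which
has vanishing moments of order `< M`. -/
theorem exists_lintegral_dilation_conv_le (f g : SchwartzMap (EuclideanSpace ℝ (Fin n)) ℝ)
    (M : ℕ) (hg : ∀ k < M,
      ∀ L : ContinuousMultilinearMap ℝ (fun _ : Fin k => EuclideanSpace ℝ (Fin n)) ℝ,
        ∫ z, L (fun _ => z) * g z = 0)
    {N : ℝ} (hN : 0 ≤ N) :
    ∃ C : ℝ, 0 ≤ C ∧ ∀ a b c : ℝ, 0 < a → a ≤ b → 0 ≤ c → c ≤ 2 * b →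
      (∫⁻ x, ENNReal.ofReal
        (|∫ y, (a ^ n * f (a • (x - y))) * (b ^ n * g (b • y))| * (1 + c * ‖x‖) ^ N)) ≤
        ENNReal.ofReal (C * ((a / b) ^ M * (b / a) ^ N)) := by
  obtain ⟨K, hK⟩ := exists_nat_ge (N + (n + 1))
  obtain ⟨C, hC0, hC⟩ := f.exists_abs_integral_comp_sub_smul_mul_le (μ := volume) g M K hg
  set w : EuclideanSpace ℝ (Fin n) → ℝ := fun u => (1 + ‖u‖) ^ (-((n : ℝ) + 1)) with hw
  have hw0 : ∀ u, 0 ≤ w u := fun u => by positivity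
  have hwint : Integrable w := integrable_one_add_norm (by simp)
  refine ⟨C * 2 ^ N * ∫ u, w u, mul_nonneg (by positivity) (integral_nonneg hw0), ?_⟩
  intro a b c ha hab hc hcb
  have hb : 0 < b := ha.trans_le hab
  have hpt : ∀ x, |∫ y, (a ^ n * f (a • (x - y))) * (b ^ n * g (b • y))| * (1 + c * ‖x‖) ^ N ≤
      C * 2 ^ N * ((a / b) ^ M * (b / a) ^ N) * a ^ n * w (a • x) := by
    intro x
    rw [integral_dilation_mul_dilation _ _ hb, abs_mul, abs_of_nonneg (by positivity : 0 ≤ a ^ n)]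
    have h1 := hC (a / b) ⟨by positivity, (div_le_one hb).2 hab⟩ (a • x)
    have hax : ‖a • x‖ = a * ‖x‖ := by rw [norm_smul, Real.norm_of_nonneg ha.le]
    have h2 : 1 + c * ‖x‖ ≤ 2 * (b / a) * (1 + ‖a • x‖) := by
      have h3 : 1 ≤ b / a := (one_le_div ha).2 hab
      have h4 : 2 * (b / a) * (1 + ‖a • x‖) = 2 * (b / a) + 2 * b * ‖x‖ := by
        rw [hax]; field_simp
      rw [h4]
      have := mul_le_mul_of_nonneg_right hcb (norm_nonneg x)
      linarith
    have h5 : (1 + c * ‖x‖) ^ N ≤ 2 ^ N * (b / a) ^ N * (1 + ‖a • x‖) ^ N := by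
      rw [← Real.mul_rpow (by positivity) (by positivity),
        ← Real.mul_rpow (by positivity) (by positivity)]
      exact Real.rpow_le_rpow (by positivity) h2 hN
    have h6 : (1 + ‖a • x‖) ^ N / (1 + ‖a • x‖) ^ K ≤ w (a • x) := by
      rw [hw, ← Real.rpow_natCast, ← Real.rpow_sub (by positivity)]
      exact Real.rpow_le_rpow_of_exponent_le (by simp) (by linarith)
    calc _ ≤ a ^ n * (C * (a / b) ^ M / (1 + ‖a • x‖) ^ K) *
          (2 ^ N * (b / a) ^ N * (1 + ‖a • x‖) ^ N) := by gcongr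
      _ = C * 2 ^ N * ((a / b) ^ M * (b / a) ^ N) * a ^ n *
          ((1 + ‖a • x‖) ^ N / (1 + ‖a • x‖) ^ K) := by ring
      _ ≤ _ := by gcongr
  have hint : Integrable fun x => C * 2 ^ N * ((a / b) ^ M * (b / a) ^ N) * a ^ n * w (a • x) :=
    ((integrable_comp_smul_iff volume w ha.ne').2 hwint).const_mul _
  refine (lintegral_mono fun x => ENNReal.ofReal_le_ofReal (hpt x)).trans ?_
  rw [← ofReal_integral_eq_lintegral_ofReal hint
    (.of_forall fun x => mul_nonneg (by positivity) (hw0 _)), integral_const_mul,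
    Measure.integral_comp_smul_of_nonneg volume w a (hR := ha.le), finrank_euclideanSpace_fin,
    smul_eq_mul]
  refine ENNReal.ofReal_le_ofReal (le_of_eq ?_)
  field_simp

end Euclidean

/-- Dyadic form of the weighted bound: with all moments of the finer function vanishing, the gain
is `2 ^ (-N d)` for any `d` not exceeding the difference of scales by more than one. -/
theorem exists_lintegral_dyadic_conv_le {n : ℕ} (f g : SchwartzMap (EuclideanSpace ℝ (Fin n)) ℝ)
    (hg : ∀ α : Fin n → ℕ, ∫ x : EuclideanSpace ℝ (Fin n), (∏ i, x i ^ α i) * g x = 0)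
    {N : ℝ} (hN : 0 ≤ N) :
    ∃ C : ℝ, 0 ≤ C ∧ ∀ (p q : ℕ) (c d : ℝ), p ≤ q → 0 ≤ c → c ≤ 2 * 2 ^ q → d ≤ q - p + 1 →
      (∫⁻ x, ENNReal.ofReal
        (|∫ y, (2 ^ (p * n) * f ((2 : ℝ) ^ p • (x - y))) *
          (2 ^ (q * n) * g ((2 : ℝ) ^ q • y))| * (1 + c * ‖x‖) ^ N)) ≤
        ENNReal.ofReal (C * 2 ^ (-N * d)) := by
  obtain ⟨M, hM⟩ := exists_nat_ge (2 * N)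
  obtain ⟨C, hC0, hC⟩ := exists_lintegral_dilation_conv_le f g M
    (fun k _ L => integral_multilinear_mul_eq_zero_of_moments g hg L) hN
  refine ⟨C * 2 ^ N, by positivity, fun p q c d hpq hc hcq hd => ?_⟩
  have h := hC (2 ^ p) (2 ^ q) c (by positivity) (pow_le_pow_right₀ one_le_two hpq) hc hcq
  simp only [← pow_mul] at h
  refine h.trans (ENNReal.ofReal_le_ofReal ?_)
  rw [mul_assoc C]
  refine mul_le_mul_of_nonneg_left ?_ hC0
  have hab : (2 : ℝ) ^ p / 2 ^ q = 2 ^ ((p : ℝ) - q) := by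
    rw [Real.rpow_sub two_pos, Real.rpow_natCast, Real.rpow_natCast]
  have hba : (2 : ℝ) ^ q / 2 ^ p = 2 ^ ((q : ℝ) - p) := by
    rw [Real.rpow_sub two_pos, Real.rpow_natCast, Real.rpow_natCast]
  rw [hab, hba, ← Real.rpow_natCast, ← Real.rpow_mul zero_le_two, ← Real.rpow_mul zero_le_two,
    ← Real.rpow_add two_pos, ← Real.rpow_add two_pos]
  refine Real.rpow_le_rpow_of_exponent_le one_le_two ?_
  have hpq' : (0 : ℝ) ≤ q - p := sub_nonneg.2 (by exact_mod_cast hpq)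
  nlinarith [mul_le_mul_of_nonneg_left hM hpq', mul_le_mul_of_nonneg_left hd hN]

/-- **Almost-orthogonality estimate (Bui's Lemma 2.1).** If `η_j = 2^{(j−1)n} η₁(2^{j−1}·)`
and `θ_k = 2^{(k−1)n} θ₁(2^{k−1}·)` for `j, k ≥ 1`, where the Schwartz functions `η₁, θ₁`
have all moments vanishing, then for every `N > 0` there is `C = C(η,θ,N) > 0` with
`∫ |η_j ∗ θ_k(x)| (1 + 2^k|x|)^N dx ≤ C 2^{−N|j−k|}` for all `j, k ≥ 0`. -/
theorem stmt13 (n : ℕ) (η₀ η₁ θ₀ θ₁ : SchwartzMap (EuclideanSpace ℝ (Fin n)) ℝ)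
    (hη₁ : ∀ α : Fin n → ℕ, ∫ x : EuclideanSpace ℝ (Fin n), (∏ i, x i ^ α i) * η₁ x = 0)
    (hθ₁ : ∀ α : Fin n → ℕ, ∫ x : EuclideanSpace ℝ (Fin n), (∏ i, x i ^ α i) * θ₁ x = 0)
    (η θ : ℕ → EuclideanSpace ℝ (Fin n) → ℝ)
    (hη0 : η 0 = η₀) (hθ0 : θ 0 = θ₀)
    (hη : ∀ j : ℕ, 1 ≤ j → ∀ x, η j x = 2 ^ ((j - 1) * n) * η₁ ((2 : ℝ) ^ (j - 1) • x))
    (hθ : ∀ k : ℕ, 1 ≤ k → ∀ x, θ k x = 2 ^ ((k - 1) * n) * θ₁ ((2 : ℝ) ^ (k - 1) • x))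
    (N : ℝ) (hN : 0 < N) :
    ∃ C : ℝ, 0 < C ∧ ∀ j k : ℕ,
      (∫⁻ x, ENNReal.ofReal
          (|∫ y, η j (x - y) * θ k y| * (1 + (2 : ℝ) ^ (k : ℝ) * ‖x‖) ^ N))
        ≤ ENNReal.ofReal (C * (2 : ℝ) ^ (-N * |(j : ℝ) - (k : ℝ)|)) := by
  obtain ⟨C₀, hC₀, h₀⟩ := exists_lintegral_dilation_conv_le η₀ θ₀ 0 (by simp) hN.le
  obtain ⟨C₁, hC₁, h₁⟩ := exists_lintegral_dyadic_conv_le η₀ θ₁ hθ₁ hN.le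
  obtain ⟨C₂, hC₂, h₂⟩ := exists_lintegral_dyadic_conv_le η₁ θ₁ hθ₁ hN.le
  obtain ⟨C₃, hC₃, h₃⟩ := exists_lintegral_dyadic_conv_le θ₀ η₁ hη₁ hN.le
  obtain ⟨C₄, hC₄, h₄⟩ := exists_lintegral_dyadic_conv_le θ₁ η₁ hη₁ hN.le
  refine ⟨C₀ + C₁ + C₂ + C₃ + C₄ + 1, by positivity, fun j k => ?_⟩
  have enlarge : ∀ C : ℝ, C ≤ C₀ + C₁ + C₂ + C₃ + C₄ + 1 →
      ENNReal.ofReal (C * (2 : ℝ) ^ (-N * |(j : ℝ) - (k : ℝ)|)) ≤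
        ENNReal.ofReal ((C₀ + C₁ + C₂ + C₃ + C₄ + 1) * (2 : ℝ) ^ (-N * |(j : ℝ) - (k : ℝ)|)) :=
    fun C hC => ENNReal.ofReal_le_ofReal (mul_le_mul_of_nonneg_right hC (by positivity))
  have swap : ∀ x, ∫ y, η j (x - y) * θ k y = ∫ y, θ k (x - y) * η j y := fun x => by
    rw [← integral_sub_left_eq_self _ _ x]
    simp [mul_comm]
  rcases le_or_gt j k with hjk | hkj
  · have habs : |(j : ℝ) - k| = k - j := by
      rw [abs_sub_comm, abs_of_nonneg (sub_nonneg.2 (by exact_mod_cast hjk))]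
    rcases k with _ | k
    · obtain rfl : j = 0 := by omega
      refine le_trans ?_ (enlarge C₀ (by linarith))
      simpa [hη0, hθ0] using h₀ 1 1 1 one_pos le_rfl zero_le_one (by norm_num)
    · have hc : (2 : ℝ) ^ ((k + 1 : ℕ) : ℝ) ≤ 2 * 2 ^ k := by
        rw [Real.rpow_natCast, pow_succ']
      simp only [hθ (k + 1) (by omega), Nat.add_sub_cancel]
      rcases j with _ | j
      · refine le_trans ?_ (enlarge C₁ (by linarith))
        simpa [hη0] using h₁ 0 k _ |((0 : ℕ) : ℝ) - (k + 1 : ℕ)| (by omega) (by positivity) hc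
          (by rw [habs]; simp)
      · refine le_trans ?_ (enlarge C₂ (by linarith))
        simp only [hη (j + 1) (by omega), Nat.add_sub_cancel]
        exact h₂ j k _ _ (by omega) (by positivity) hc (by rw [habs]; push_cast; linarith)
  · have habs : |(j : ℝ) - k| = j - k := abs_of_nonneg (sub_nonneg.2 (by exact_mod_cast hkj.le))
    simp only [swap]
    obtain ⟨j, rfl⟩ : ∃ i, j = i + 1 := ⟨j - 1, by omega⟩
    have hc : (2 : ℝ) ^ (k : ℝ) ≤ 2 * 2 ^ j := by
      rw [Real.rpow_natCast, ← pow_succ']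
      exact pow_le_pow_right₀ one_le_two (by omega)
    simp only [hη (j + 1) (by omega), Nat.add_sub_cancel]
    rcases k with _ | k
    · refine le_trans ?_ (enlarge C₃ (by linarith))
      simpa [hθ0] using h₃ 0 j _ |((j + 1 : ℕ) : ℝ) - (0 : ℕ)| (by omega) (by positivity) hc
        (by rw [habs]; simp)
    · refine le_trans ?_ (enlarge C₄ (by linarith))
      simp only [hθ (k + 1) (by omega), Nat.add_sub_cancel]
      exact h₄ k j _ _ (by omega) (by positivity) hc (by rw [habs]; push_cast; linarith)
end
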